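/- Let X be a metric space, x₀ ∈ X, and let φ : X → ℝ be a bounded continuous Higson function. Given disjoint subsets U, V ⊆ X with d(x,U)+d(x,V) ≠ 0 for all x, the function φ(x) = d(x,U)/(d(x,U)+d(x,V)) satisfies φ|_U ≡ 0 and φ|_V ≡ 1; moreover if U and V are coarsely disjoint then φ is a Higson function, i.e., for every entourage E ⊆ X² and every ε > 0 there is a bounded set K ⊆ X such that |φ(y) − φ(x)| < ε for all (x,y) ∈ E with x,y ∉ K. -/

import Mathlib

open Set Bornology Metric

/-- `E ⊆ X × X` is an entourage if `sup_{(x,y) ∈ E} d(x,y) < ∞`. -/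
def IsEnt {X : Type*} [PseudoMetricSpace X] (E : Set (X × X)) : Prop :=
  ∃ C : ℝ, ∀ p ∈ E, dist p.1 p.2 ≤ C

/-- `E[A] = {y : ∃ a ∈ A, (a,y) ∈ E}`. -/
def entImg {X : Type*} [PseudoMetricSpace X] (E : Set (X × X)) (A : Set X) : Set X :=
  {y | ∃ a ∈ A, (a, y) ∈ E}

/-- `A` and `B` are not coarsely disjoint: some entourage `E` has `E[A] ∩ E[B]` unbounded. -/
def NotCD {X : Type*} [PseudoMetricSpace X] (A B : Set X) : Prop :=
  ∃ E : Set (X × X), IsEnt E ∧ ¬ IsBounded (entImg E A ∩ entImg E B)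

/-- `A` and `B` are coarsely disjoint: every entourage `E` has `E[A] ∩ E[B]` bounded. -/
def CD {X : Type*} [PseudoMetricSpace X] (A B : Set X) : Prop :=
  ∀ E : Set (X × X), IsEnt E → IsBounded (entImg E A ∩ entImg E B)

/-- Coarsely uniform: `f × f` maps entourages to entourages. -/
def CUnif {X Y : Type*} [PseudoMetricSpace X] [PseudoMetricSpace Y] (f : X → Y) : Prop :=
  ∀ E : Set (X × X), IsEnt E → IsEnt ((fun p : X × X => (f p.1, f p.2)) '' E)

/-- Coarsely proper: preimages of bounded sets are bounded. -/
def CProper {X Y : Type*} [PseudoMetricSpace X] [PseudoMetricSpace Y] (f : X → Y) : Prop :=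
  ∀ B : Set Y, IsBounded B → IsBounded (f ⁻¹' B)

/-- A coarse map is coarsely uniform and coarsely proper. -/
def Coarse {X Y : Type*} [PseudoMetricSpace X] [PseudoMetricSpace Y] (f : X → Y) : Prop :=
  CUnif f ∧ CProper f

/-- Coarsely injective: `(f × f)⁻¹` of any entourage is an entourage. -/
def CInj {X Y : Type*} [PseudoMetricSpace X] [PseudoMetricSpace Y] (f : X → Y) : Prop :=
  ∀ F : Set (Y × Y), IsEnt F → IsEnt ((fun p : X × X => (f p.1, f p.2)) ⁻¹' F)

/-- A coarse ultrafilter on a metric space. -/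
structure CUF (X : Type*) [PseudoMetricSpace X] where
  sets : Set (Set X)
  pairClose : ∀ A ∈ sets, ∀ B ∈ sets, NotCD A B
  split : ∀ A B : Set X, A ∪ B ∈ sets → A ∈ sets ∨ B ∈ sets
  univ_mem : Set.univ ∈ sets

/-- Pushforward system of sets of a coarse ultrafilter along a map. -/
def push {X Y : Type*} [PseudoMetricSpace X] [PseudoMetricSpace Y] (f : X → Y) (F : CUF X) :
    Set (Set Y) :=
  {A : Set Y | f ⁻¹' A ∈ F.sets}

/-- Asymptotically alike coarse ultrafilters. -/
def AAlike {X : Type*} [PseudoMetricSpace X] (F G : CUF X) : Prop :=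
  ∀ A ∈ F.sets, ∀ B ∈ G.sets, NotCD A B

/-- Asymptotically alike, on raw systems of subsets. -/
def AAlikeS {X : Type*} [PseudoMetricSpace X] (S T : Set (Set X)) : Prop :=
  ∀ A ∈ S, ∀ B ∈ T, NotCD A B

/-- If `a'`, `b'` are within `C` of `a`, `b`, the ratios `a / (a + b)` and `a' / (a' + b')`
differ by at most `C / (a' + b')`. -/
lemma abs_div_add_sub_div_add_le {a b a' b' C : ℝ} (ha : 0 ≤ a) (hb : 0 ≤ b)
    (h : 0 < a + b) (h' : 0 < a' + b') (hac : |a' - a| ≤ C) (hbc : |b' - b| ≤ C) :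
    |a' / (a' + b') - a / (a + b)| ≤ C / (a' + b') := by
  rw [div_sub_div _ _ h'.ne' h.ne', abs_div, abs_of_pos (mul_pos h' h),
    div_le_div_iff₀ (mul_pos h' h) h']
  have key : |a' * (a + b) - (a' + b') * a| ≤ C * (a + b) := by
    rw [abs_le] at *
    constructor <;> nlinarith [mul_le_mul_of_nonneg_right hac.1 hb,
      mul_le_mul_of_nonneg_right hac.2 hb, mul_le_mul_of_nonneg_right hbc.1 ha,
      mul_le_mul_of_nonneg_right hbc.2 ha]
  calc _ ≤ C * (a + b) * (a' + b') := mul_le_mul_of_nonneg_right key h'.le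
    _ = _ := by ring

lemma abs_infDist_sub_infDist_le {X : Type*} [PseudoMetricSpace X] (s : Set X) (x y : X) :
    |infDist y s - infDist x s| ≤ dist x y := by
  have h := infDist_le_infDist_add_dist (s := s) (x := y) (y := x)
  have h' := infDist_le_infDist_add_dist (s := s) (x := x) (y := y)
  rw [dist_comm y x] at h
  rw [abs_le]
  constructor <;> linarith

/-- Away from a bounded set, the points are at distance at least `R` from one of two
coarsely disjoint sets. -/
lemma CD.isBounded_setOf_infDist_lt {X : Type*} [PseudoMetricSpace X] {U V : Set X}
    (h : CD U V) (hU : U.Nonempty) (hV : V.Nonempty) (R : ℝ) :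
    IsBounded {x | infDist x U < R ∧ infDist x V < R} := by
  refine (h {p | dist p.1 p.2 ≤ R} ⟨R, fun _ hp => hp⟩).subset ?_
  rintro x ⟨hxU, hxV⟩
  obtain ⟨u, hu, hxu⟩ := (infDist_lt_iff hU).1 hxU
  obtain ⟨v, hv, hxv⟩ := (infDist_lt_iff hV).1 hxV
  exact ⟨⟨u, hu, (dist_comm u x).trans_le hxu.le⟩, ⟨v, hv, (dist_comm v x).trans_le hxv.le⟩⟩

/-- the Urysohn-type function `x ↦ d(x,U)/(d(x,U)+d(x,V))` is `0` on `U`,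
`1` on `V`, and is a Higson function whenever `U` and `V` are coarsely disjoint. -/
theorem stmt8 {X : Type*} [MetricSpace X] (U V : Set X) (hUV : Disjoint U V)
    (hne : ∀ x : X, infDist x U + infDist x V ≠ 0) :
    (∀ x ∈ U, infDist x U / (infDist x U + infDist x V) = 0) ∧
    (∀ x ∈ V, infDist x U / (infDist x U + infDist x V) = 1) ∧
    (CD U V → ∀ E : Set (X × X), IsEnt E → ∀ ε > (0 : ℝ), ∃ K : Set X, IsBounded K ∧
      ∀ p ∈ E, p.1 ∉ K → p.2 ∉ K →
        |infDist p.2 U / (infDist p.2 U + infDist p.2 V) -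
          infDist p.1 U / (infDist p.1 U + infDist p.1 V)| < ε) := by
  refine ⟨fun x hx => by simp [infDist_zero_of_mem hx], fun x hx => ?_, ?_⟩
  · have h := hne x
    rw [infDist_zero_of_mem hx, add_zero] at h ⊢
    exact div_self h
  rintro hcd E ⟨C, hC⟩ ε hε
  rcases U.eq_empty_or_nonempty with rfl | hU
  · exact ⟨∅, isBounded_empty, fun p _ _ _ => by simpa using hε⟩
  rcases V.eq_empty_or_nonempty with rfl | hV
  · refine ⟨∅, isBounded_empty, fun p _ _ _ => ?_⟩
    rw [infDist_empty, infDist_empty, add_zero, add_zero, div_self (by simpa using hne p.2),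
      div_self (by simpa using hne p.1)]
    simpa using hε
  refine ⟨_, hcd.isBounded_setOf_infDist_lt hU hV (C / ε + 1), fun p hp _ hK => ?_⟩
  have hpos : ∀ x, 0 < infDist x U + infDist x V := fun x =>
    lt_of_le_of_ne (add_nonneg infDist_nonneg infDist_nonneg) (hne x).symm
  refine (abs_div_add_sub_div_add_le infDist_nonneg infDist_nonneg (hpos p.1) (hpos p.2)
    ((abs_infDist_sub_infDist_le U p.1 p.2).trans (hC p hp))
    ((abs_infDist_sub_infDist_le V p.1 p.2).trans (hC p hp))).trans_lt ?_
  have hlt : C / ε < infDist p.2 U + infDist p.2 V := by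
    have hU0 := infDist_nonneg (x := p.2) (s := U)
    have hV0 := infDist_nonneg (x := p.2) (s := V)
    by_contra! hle
    exact hK ⟨by linarith, by linarith⟩
  rw [div_lt_iff₀ hε] at hlt
  rwa [div_lt_iff₀ (hpos p.2), mul_comm]
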